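/- Let α ≥ 1. There exists a constant C_α > 0 such that for every T > 0 and every Lipschitz curve γ = (x(·),y(·),z(·)) : [0,T] → ℝ³ with x′(t) = h₁(t), y′(t) = h₂(t), z′(t) = |x(t)|^α h₂(t) a.e. for measurable controls satisfying h₁(t)² + h₂(t)² ≤ 1, one has | z(T) − z(0) − |x(0)|^α ( y(T) − y(0) ) | ≤ C_α ( |x(0)|^{α−1} T² + T^{α+1} ). -/

import Mathlib

open MeasureTheory

lemma hve_ftc {f : ℝ → ℝ} {T t M : ℝ} (hf : AbsolutelyContinuousOnInterval f 0 T)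
    (ht : t ∈ Set.Icc 0 T)
    (hd : ∀ᵐ s ∂(volume.restrict (Set.Ioo 0 T)), |deriv f s| ≤ M) :
    |f t - f 0| ≤ M * t := by
  have hT : 0 ≤ T := ht.1.trans ht.2
  have hf' : AbsolutelyContinuousOnInterval f 0 t := by
    apply hf.mono
    rw [Set.uIcc_of_le ht.1, Set.uIcc_of_le hT]
    exact Set.Icc_subset_Icc_right ht.2
  rw [← hf'.integral_deriv_eq_sub]
  rw [← Measure.restrict_congr_set (Ioo_ae_eq_Ioc (μ := volume) (a := (0:ℝ)) (b := T)).symm,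
    ae_restrict_iff' measurableSet_Ioc] at hd
  have := intervalIntegral.norm_integral_le_of_norm_le_const_ae (a := 0) (b := t) (C := M)
    (f := deriv f) (by
      filter_upwards [hd] with s hs hs'
      rw [Set.uIoc_of_le ht.1] at hs'
      exact hs ⟨hs'.1, hs'.2.trans ht.2⟩)
  simpa [abs_of_nonneg ht.1] using this

lemma hve_rpow_aux {α a b : ℝ} (hα : 1 ≤ α) (ha : 0 ≤ a) (hab : a ≤ b) :
    b ^ α - a ^ α ≤ α * b ^ (α - 1) * (b - a) := by
  have := Convex.norm_image_sub_le_of_norm_hasDerivWithin_le (f := fun u : ℝ => u ^ α)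
    (f' := fun u => α * u ^ (α - 1)) (s := Set.Icc 0 b) (x := a) (y := b)
    (C := α * b ^ (α - 1))
    (fun u _ => (Real.hasDerivAt_rpow_const (Or.inr hα)).hasDerivWithinAt)
    (fun u hu => by
      rw [Real.norm_of_nonneg (mul_nonneg (by linarith) (Real.rpow_nonneg hu.1 _))]
      exact mul_le_mul_of_nonneg_left
        (Real.rpow_le_rpow hu.1 hu.2 (by linarith)) (by linarith))
    (convex_Icc 0 b) ⟨ha, hab⟩ ⟨ha.trans hab, le_rfl⟩
  rw [Real.norm_eq_abs, Real.norm_of_nonneg (sub_nonneg.2 hab)] at this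
  exact (le_abs_self _).trans this

lemma hve_rpow {α a b c T : ℝ} (hα : 1 ≤ α) (ha : 0 ≤ a) (hb : 0 ≤ b)
    (hac : a ≤ c) (hbc : b ≤ c) (h : |b - a| ≤ T) :
    |b ^ α - a ^ α| ≤ α * c ^ (α - 1) * T := by
  have hc : 0 ≤ c := ha.trans hac
  have key : ∀ u v : ℝ, 0 ≤ u → u ≤ v → v ≤ c → v - u ≤ T →
      v ^ α - u ^ α ≤ α * c ^ (α - 1) * T := by
    intro u v hu huv hvc hT
    refine (hve_rpow_aux hα hu huv).trans ?_
    have h1 : v ^ (α - 1) ≤ c ^ (α - 1) :=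
      Real.rpow_le_rpow (hu.trans huv) hvc (by linarith)
    have h2 : 0 ≤ c ^ (α - 1) := Real.rpow_nonneg hc _
    have h3 : α * v ^ (α - 1) ≤ α * c ^ (α - 1) :=
      mul_le_mul_of_nonneg_left h1 (by linarith)
    exact mul_le_mul h3 hT (by linarith) (mul_nonneg (by linarith) h2)
  have h' := abs_le.1 h
  rcases le_total a b with hab | hab
  · rw [abs_of_nonneg (sub_nonneg.2 (Real.rpow_le_rpow ha hab (by linarith)))]
    exact key a b ha hab hbc (by linarith)
  · rw [abs_sub_comm,
      abs_of_nonneg (sub_nonneg.2 (Real.rpow_le_rpow hb hab (by linarith)))]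
    exact key b a hb hab hac (by linarith)

lemma hve_add {p a b : ℝ} (hp : 0 ≤ p) (ha : 0 ≤ a) (hb : 0 ≤ b) :
    (a + b) ^ p ≤ 2 ^ p * (a ^ p + b ^ p) := by
  have h1 := Real.rpow_nonneg ha p
  have h2 := Real.rpow_nonneg hb p
  have h3 : (0:ℝ) ≤ 2 ^ p := by positivity
  rcases le_total a b with hab | hab
  · calc (a + b) ^ p ≤ (2 * b) ^ p := Real.rpow_le_rpow (by linarith) (by linarith) hp
      _ = 2 ^ p * b ^ p := Real.mul_rpow (by norm_num) hb
      _ ≤ _ := mul_le_mul_of_nonneg_left (by linarith) h3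
  · calc (a + b) ^ p ≤ (2 * a) ^ p := Real.rpow_le_rpow (by linarith) (by linarith) hp
      _ = 2 ^ p * a ^ p := Real.mul_rpow (by norm_num) ha
      _ ≤ _ := mul_le_mul_of_nonneg_left (by linarith) h3

/-- Along any horizontal curve for `X₁ = ∂ₓ`, `X₂ = ∂_y + |x|^α ∂_z` with sub-unit
controls, the vertical displacement relative to `|x(0)|^α (y(T) - y(0))` is controlled
by `|x(0)|^{α-1} T² + T^{α+1}`. -/
theorem horizontal_vertical_estimate (α : ℝ) (hα : 1 ≤ α) :
    ∃ C : ℝ, 0 < C ∧ ∀ T : ℝ, 0 < T → ∀ x y z h₁ h₂ : ℝ → ℝ,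
      (∃ K, LipschitzOnWith K (fun t => (x t, y t, z t)) (Set.Icc 0 T)) →
      Measurable h₁ → Measurable h₂ →
      (∀ t, (h₁ t) ^ 2 + (h₂ t) ^ 2 ≤ 1) →
      (∀ᵐ t ∂(volume.restrict (Set.Ioo 0 T)),
        HasDerivAt x (h₁ t) t ∧ HasDerivAt y (h₂ t) t ∧
          HasDerivAt z (|x t| ^ α * h₂ t) t) →
      |z T - z 0 - |x 0| ^ α * (y T - y 0)| ≤
        C * (|x 0| ^ (α - 1) * T ^ 2 + T ^ (α + 1)) := by
  refine ⟨α * 2 ^ (α - 1), by positivity, ?_⟩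
  intro T hT x y z h₁ h₂ ⟨K, hK⟩ _ _ hh hder
  have hI : Set.uIcc 0 T = Set.Icc 0 T := Set.uIcc_of_le hT.le
  have hx : AbsolutelyContinuousOnInterval x 0 T := by
    apply LipschitzOnWith.absolutelyContinuousOnInterval (K := 1 * K)
    rw [hI]; exact LipschitzWith.prod_fst.comp_lipschitzOnWith hK
  have hyz : LipschitzOnWith (1 * K) (fun t => (y t, z t)) (Set.Icc 0 T) :=
    LipschitzWith.prod_snd.comp_lipschitzOnWith hK
  have hy : AbsolutelyContinuousOnInterval y 0 T := by
    apply LipschitzOnWith.absolutelyContinuousOnInterval (K := 1 * (1 * K))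
    rw [hI]; exact LipschitzWith.prod_fst.comp_lipschitzOnWith hyz
  have hz : AbsolutelyContinuousOnInterval z 0 T := by
    apply LipschitzOnWith.absolutelyContinuousOnInterval (K := 1 * (1 * K))
    rw [hI]; exact LipschitzWith.prod_snd.comp_lipschitzOnWith hyz
  have hxb : ∀ t ∈ Set.Icc 0 T, |x t - x 0| ≤ T := by
    intro t ht
    have := hve_ftc (M := 1) hx ht (by
      filter_upwards [hder] with s hs
      rw [hs.1.deriv]
      exact abs_le_one_iff_mul_self_le_one.2 (by nlinarith [hh s, sq_nonneg (h₂ s)]))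
    linarith [ht.2]
  have hw : AbsolutelyContinuousOnInterval (z - fun t => |x 0| ^ α * y t) 0 T :=
    hz.sub (hy.const_mul _)
  have hmain := hve_ftc (M := α * (|x 0| + T) ^ (α - 1) * T) hw ⟨hT.le, le_rfl⟩ (by
    filter_upwards [hder, ae_restrict_mem measurableSet_Ioo] with s hs hsT
    rw [(hs.2.2.sub (hs.2.1.const_mul (|x 0| ^ α))).deriv, ← sub_mul, abs_mul]
    have h1 : |h₂ s| ≤ 1 :=
      abs_le_one_iff_mul_self_le_one.2 (by nlinarith [hh s, sq_nonneg (h₁ s)])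
    have h2 := hxb s ⟨hsT.1.le, hsT.2.le⟩
    have h3 := abs_abs_sub_abs_le_abs_sub (x s) (x 0)
    have h4 := h3.trans h2
    have h5 := hve_rpow (c := |x 0| + T) hα (abs_nonneg (x 0)) (abs_nonneg (x s))
      (by linarith) (by linarith [(abs_le.1 h4).2]) h4
    exact (mul_le_of_le_one_right (abs_nonneg _) h1).trans h5)
  have e : z T - z 0 - |x 0| ^ α * (y T - y 0) =
      (z - fun t => |x 0| ^ α * y t) T - (z - fun t => |x 0| ^ α * y t) 0 := by
    simp only [Pi.sub_apply]; ring
  rw [e]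
  refine hmain.trans ?_
  have h6 := hve_add (p := α - 1) (by linarith) (abs_nonneg (x 0)) hT.le
  have h7 : T ^ (α + 1) = T ^ (α - 1) * T ^ 2 := by
    rw [← Real.rpow_natCast T 2, ← Real.rpow_add hT]
    congr 1; push_cast; ring
  rw [h7]
  calc α * (|x 0| + T) ^ (α - 1) * T * T = (α * T ^ 2) * (|x 0| + T) ^ (α - 1) := by ring
    _ ≤ (α * T ^ 2) * (2 ^ (α - 1) * (|x 0| ^ (α - 1) + T ^ (α - 1))) :=
      mul_le_mul_of_nonneg_left h6 (by positivity)
    _ = _ := by ring
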